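/- arXiv:2110.10265 — 2 statements merged into one kernel-verified Lean document; each statement's English description precedes it below -/
import Mathlib

section
/- Let Q be the base Markov operator on C⁰(X⁻), (Qφ)(x⁻) = Σ_{i=1}^ℓ p_i(x⁻)φ((x⁻,i)), where the transition probability vector p : X⁻ → Δ^{ℓ−1} is α-Hölder. Then for every φ ∈ C^α(X⁻) and every n ∈ ℕ: v_α(Qⁿφ) ≤ 2^{−nα} v_α(φ) + (v_α(p)/(1−2^{−α})) ‖φ‖_∞. -/
/-!
The transition functions form a Markov operator, so `Q` does not increase the sup norm, and
appending a common symbol to two pasts exactly halves their distance (`distXm_push`). Writing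
`Qφ(x) - Qφ(y) = ∑ pᵢ(x) (φ(x,i) - φ(y,i)) + ∑ (pᵢ(x) - pᵢ(y)) φ(y,i)`
gives the one-step inequality `v_α(Qφ) ≤ 2^{-α} v_α(φ) + v_α(p) ‖φ‖_∞` (`Qbase_holder`). It is
iterated by induction on `n`: with `r = 2^{-α}`, the number `K = v_α(p) / (1 - r)` is the fixed
point of `K ↦ r K + v_α(p)`, so the bound `rⁿ v_α(φ) + K ‖φ‖_∞` is reproduced at each step.
-/

open MeasureTheory Filter Matrix Set

noncomputable section

attribute [local instance] Matrix.linftyOpNormedAddCommGroup Matrix.linftyOpNormedRing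
attribute [local instance] Classical.propDecidable

/-- The two-sided shift space on `ℓ` symbols. -/
abbrev XX (ℓ : ℕ) := ℤ → Fin ℓ
/-- The one-sided space of past coordinates `X⁻`. -/
abbrev Xm (ℓ : ℕ) := {n : ℤ // n ≤ 0} → Fin ℓ
/-- The one-sided space of future coordinates `X⁺`. -/
abbrev Xp (ℓ : ℕ) := {n : ℤ // 0 < n} → Fin ℓ

variable {ℓ d : ℕ}

/-- The left shift `T`. -/
def shiftT (x : XX ℓ) : XX ℓ := fun i => x (i + 1)
/-- The inverse (right) shift `T⁻¹`. -/
def shiftInv (x : XX ℓ) : XX ℓ := fun i => x (i - 1)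

def Pm (x : XX ℓ) : Xm ℓ := fun n => x n.1
def Pp (x : XX ℓ) : Xp ℓ := fun n => x n.1

/-- distance on `X`: `d(x,y) = 2^{-min{ i ≥ 0 : x_i ≠ y_i or x_{-i} ≠ y_{-i}}}`. -/
def distX (x y : XX ℓ) : ℝ :=
  if x = y then 0
  else (2 : ℝ) ^ (-((sInf {n : ℕ | x (n : ℤ) ≠ y (n : ℤ) ∨ x (-(n : ℤ)) ≠ y (-(n : ℤ))} : ℕ) : ℤ))

/-- distance on `X⁻`. -/
def distXm (x y : Xm ℓ) : ℝ :=
  if x = y then 0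
  else (2 : ℝ) ^ (-((sInf {n : ℕ | x ⟨-(n : ℤ), by omega⟩ ≠ y ⟨-(n : ℤ), by omega⟩} : ℕ) : ℤ))

/-- distance on `X⁺`. -/
def distXp (x y : Xp ℓ) : ℝ :=
  if x = y then 0
  else (2 : ℝ) ^ (-((sInf {n : ℕ | x ⟨(n : ℤ) + 1, by omega⟩ ≠ y ⟨(n : ℤ) + 1, by omega⟩} : ℕ) : ℤ))

/-- local stable set. -/
def WsLoc (x : XX ℓ) : Set (XX ℓ) := {y | ∀ n : ℤ, 0 ≤ n → y n = x n}
/-- local unstable set. -/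
def WuLoc (x : XX ℓ) : Set (XX ℓ) := {y | ∀ n : ℤ, n ≤ 0 → y n = x n}

/-- cylinder `[i] = {x : x₀ = i}`. -/
def cyl (i : Fin ℓ) : Set (XX ℓ) := {x | x 0 = i}

/-- `μ` has local product structure with Hölder density `ρ`. -/
def HasLocalProductHolder (μ : Measure (XX ℓ)) : Prop :=
  ∃ (ρ : Xm ℓ × Xp ℓ → ℝ) (α C : ℝ), 0 < α ∧
    (∀ z, 0 < ρ z) ∧
    (∀ z w, |ρ z - ρ w| ≤ C * max (distXm z.1 w.1) (distXp z.2 w.2) ^ α) ∧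
    (∀ i : Fin ℓ,
      (μ.restrict (cyl i)).map (fun x => (Pm x, Pp x)) =
        ((((μ.restrict (cyl i)).map Pm).prod ((μ.restrict (cyl i)).map Pp)).withDensity
          (fun z => ENNReal.ofReal (ρ z))))
/-- `(x⁻, i)`: shift `x⁻ ∈ X⁻` one place to the left and append the symbol `i`
at position `0`. -/
def push (xm : Xm ℓ) (i : Fin ℓ) : Xm ℓ := fun n =>
  if h : (n : ℤ) = 0 then i else xm ⟨(n : ℤ) + 1, by have := n.2; omega⟩

/-- `μu` is a disintegration of `μ` over the partition into local unstable sets,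
indexed by `x⁻ ∈ X⁻`. -/
def IsUnstableDisint (μ : Measure (XX ℓ)) (μu : Xm ℓ → Measure (XX ℓ)) : Prop :=
  (∀ xm : Xm ℓ, IsProbabilityMeasure (μu xm)) ∧
  (∀ xm : Xm ℓ, μu xm {x : XX ℓ | Pm x ≠ xm} = 0) ∧
  (∀ s : Set (XX ℓ), MeasurableSet s → μ s = ∫⁻ xm, μu xm s ∂(μ.map Pm))

/-- the transition probabilities `p_i(x⁻) = μ^u_{x⁻}(W^u_{x⁻} ∩ T⁻¹ W^u_{(x⁻,i)})
 = μ^u_{x⁻}{x : x₁ = i}`. -/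
def transP (μu : Xm ℓ → Measure (XX ℓ)) (i : Fin ℓ) (xm : Xm ℓ) : ℝ :=
  (μu xm {x : XX ℓ | x 1 = i}).toReal
/-- the base Markov operator `(Qφ)(x⁻) = Σ_i p_i(x⁻) φ((x⁻,i))`. -/
def Qbase {ℓ : ℕ} (p : Fin ℓ → Xm ℓ → ℝ) (φ : Xm ℓ → ℝ) : Xm ℓ → ℝ :=
  fun xm => ∑ i : Fin ℓ, p i xm * φ (push xm i)

lemma push_injective {ℓ : ℕ} (i : Fin ℓ) : Function.Injective (fun x : Xm ℓ => push x i) := by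
  intro x y h
  funext n
  have hn := n.2
  have h1 := congrFun h ⟨(n : ℤ) - 1, by omega⟩
  have h0 : ((n : ℤ) - 1) ≠ 0 := by omega
  simpa [push, h0] using h1

lemma distXm_push {ℓ : ℕ} (x y : Xm ℓ) (i : Fin ℓ) :
    distXm (push x i) (push y i) = 2⁻¹ * distXm x y := by
  by_cases hxy : x = y
  · simp [hxy, distXm]
  have hne : push x i ≠ push y i := fun h => hxy (push_injective i h)
  have hshift := Nat.sInf_add (n := 1)
    (p := fun n : ℕ => push x i ⟨-(n : ℤ), by omega⟩ ≠ push y i ⟨-(n : ℤ), by omega⟩) (by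
      rw [Nat.one_le_iff_ne_zero]
      intro h
      rcases Nat.sInf_eq_zero.1 h with h | h
      · exact h (by simp [push])
      -- an empty disagreement set would force the two pasts to coincide
      · apply hne
        funext n
        have hn := n.2
        by_contra hcon
        have hmem : (-(n : ℤ)).toNat ∈ {m : ℕ | push x i ⟨-(m : ℤ), by omega⟩ ≠
            push y i ⟨-(m : ℤ), by omega⟩} := by
          have he : (⟨-(((-(n : ℤ)).toNat : ℕ) : ℤ), by omega⟩ : {n : ℤ // n ≤ 0}) = n :=
            Subtype.ext (by simp only; omega)
          simpa only [Set.mem_ofPred_eq, he] using hcon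
        rw [h] at hmem
        exact hmem)
  have hset : {m : ℕ | push x i ⟨-((m + 1 : ℕ) : ℤ), by omega⟩ ≠
      push y i ⟨-((m + 1 : ℕ) : ℤ), by omega⟩} =
      {m : ℕ | x ⟨-(m : ℤ), by omega⟩ ≠ y ⟨-(m : ℤ), by omega⟩} := by
    ext m
    have h0 : -((m + 1 : ℕ) : ℤ) ≠ 0 := by omega
    have h1 : -((m + 1 : ℕ) : ℤ) + 1 = -(m : ℤ) := by omega
    simp only [push, h0, dite_false, h1, Set.mem_ofPred_eq]
  rw [hset] at hshift
  unfold distXm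
  rw [if_neg hxy, if_neg hne, ← hshift, Nat.cast_add, neg_add, zpow_add₀ two_ne_zero]
  norm_num [mul_comm]

lemma distXm_nonneg {ℓ : ℕ} (x y : Xm ℓ) : 0 ≤ distXm x y := by
  unfold distXm
  split_ifs <;> positivity

lemma Qbase_abs_le {ℓ : ℕ} {p : Fin ℓ → Xm ℓ → ℝ}
    (hp0 : ∀ i x, 0 ≤ p i x) (hp1 : ∀ x, ∑ i : Fin ℓ, p i x = 1)
    {φ : Xm ℓ → ℝ} {s : ℝ} (hs : ∀ x, |φ x| ≤ s) (x : Xm ℓ) : |Qbase p φ x| ≤ s := by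
  calc |Qbase p φ x| ≤ ∑ i, |p i x * φ (push x i)| := Finset.abs_sum_le_sum_abs _ _
    _ ≤ ∑ i, p i x * s := Finset.sum_le_sum fun i _ => by
        rw [abs_mul, abs_of_nonneg (hp0 i x)]
        exact mul_le_mul_of_nonneg_left (hs _) (hp0 i x)
    _ = s := by rw [← Finset.sum_mul, hp1, one_mul]

/-- The one-step Lasota–Yorke inequality. -/
lemma Qbase_holder {ℓ : ℕ} {α : ℝ} {p : Fin ℓ → Xm ℓ → ℝ}
    (hp0 : ∀ i x, 0 ≤ p i x) (hp1 : ∀ x, ∑ i : Fin ℓ, p i x = 1) {vp : ℝ}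
    (hp : ∀ x y : Xm ℓ, ∑ i : Fin ℓ, |p i x - p i y| ≤ vp * distXm x y ^ α)
    {φ : Xm ℓ → ℝ} {v s : ℝ} (hv : ∀ x y, |φ x - φ y| ≤ v * distXm x y ^ α)
    (hs : ∀ x, |φ x| ≤ s) (x y : Xm ℓ) :
    |Qbase p φ x - Qbase p φ y| ≤ ((2 : ℝ) ^ (-α) * v + vp * s) * distXm x y ^ α := by
  have hs0 : 0 ≤ s := (abs_nonneg _).trans (hs x)
  have hhalf : ∀ i, |φ (push x i) - φ (push y i)| ≤ 2 ^ (-α) * v * distXm x y ^ α := fun i => by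
    have h := hv (push x i) (push y i)
    rw [distXm_push, Real.mul_rpow (by norm_num) (distXm_nonneg x y),
      Real.inv_rpow (by norm_num), ← Real.rpow_neg (by norm_num)] at h
    linarith
  have hsplit : Qbase p φ x - Qbase p φ y =
      ∑ i, (p i x * (φ (push x i) - φ (push y i)) + (p i x - p i y) * φ (push y i)) := by
    unfold Qbase
    rw [← Finset.sum_sub_distrib]
    exact Finset.sum_congr rfl fun i _ => by ring
  calc |Qbase p φ x - Qbase p φ y|
      ≤ ∑ i, |p i x * (φ (push x i) - φ (push y i)) + (p i x - p i y) * φ (push y i)| := by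
        rw [hsplit]
        exact Finset.abs_sum_le_sum_abs _ _
    _ ≤ ∑ i, (p i x * (2 ^ (-α) * v * distXm x y ^ α) + |p i x - p i y| * s) :=
        Finset.sum_le_sum fun i _ => by
          refine (abs_add_le _ _).trans (add_le_add ?_ ?_)
          · rw [abs_mul, abs_of_nonneg (hp0 i x)]
            exact mul_le_mul_of_nonneg_left (hhalf i) (hp0 i x)
          · rw [abs_mul]
            exact mul_le_mul_of_nonneg_left (hs _) (abs_nonneg _)
    _ = 2 ^ (-α) * v * distXm x y ^ α + (∑ i, |p i x - p i y|) * s := by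
        rw [Finset.sum_add_distrib, ← Finset.sum_mul, ← Finset.sum_mul, hp1, one_mul]
    _ ≤ 2 ^ (-α) * v * distXm x y ^ α + vp * distXm x y ^ α * s := by
        gcongr
        exact hp x y
    _ = _ := by ring

/-- Proposition: Lasota–Yorke inequality for the base operator.
If the transition probability vector `p : X⁻ → Δ^{ℓ−1}` is `α`-Hölder with seminorm
`v_α(p)`, then `v_α(Qⁿφ) ≤ 2^{−nα} v_α(φ) + (v_α(p)/(1−2^{−α})) ‖φ‖_∞` for every
`φ ∈ C^α(X⁻)` and `n ∈ ℕ`. -/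
theorem base_operator_lasota_yorke
    {ℓ : ℕ} (hℓ : 0 < ℓ)
    (α : ℝ) (hα : 0 < α) (hα1 : α ≤ 1)
    (p : Fin ℓ → Xm ℓ → ℝ)
    (hp0 : ∀ i xm, 0 ≤ p i xm)
    (hp1 : ∀ xm, ∑ i : Fin ℓ, p i xm = 1)
    (vp : ℝ)
    (hpHolder : ∀ xm ym : Xm ℓ,
      ∑ i : Fin ℓ, |p i xm - p i ym| ≤ vp * distXm xm ym ^ α) :
    ∀ (φ : Xm ℓ → ℝ) (v s : ℝ),
      (∀ xm ym : Xm ℓ, |φ xm - φ ym| ≤ v * distXm xm ym ^ α) →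
      (∀ xm : Xm ℓ, |φ xm| ≤ s) →
      ∀ n : ℕ, ∀ xm ym : Xm ℓ,
        |(Qbase p)^[n] φ xm - (Qbase p)^[n] φ ym| ≤
          ((2 : ℝ) ^ (-(n : ℝ) * α) * v + vp / (1 - (2 : ℝ) ^ (-α)) * s) *
            distXm xm ym ^ α := by
  intro φ v s hv hs n
  have hr : (2 : ℝ) ^ (-α) < 1 := Real.rpow_lt_one_of_one_lt_of_neg (by norm_num) (by linarith)
  have hbound : ∀ n : ℕ, ∀ x, |(Qbase p)^[n] φ x| ≤ s := by
    intro n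
    induction n with
    | zero => exact hs
    | succ n ih =>
      rw [Function.iterate_succ_apply']
      exact Qbase_abs_le hp0 hp1 ih
  induction n with
  | zero =>
    intro x y
    have hs0 : 0 ≤ s := (abs_nonneg _).trans (hs x)
    -- `vp` itself may be negative when `X⁻` is a single point; only this product is nonnegative
    have hvp : 0 ≤ vp * distXm x y ^ α :=
      (Finset.sum_nonneg fun i _ => abs_nonneg _).trans (hpHolder x y)
    have hextra : 0 ≤ vp / (1 - (2 : ℝ) ^ (-α)) * s * distXm x y ^ α := by
      have h := mul_nonneg (div_nonneg hvp (sub_nonneg.2 hr.le)) hs0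
      calc 0 ≤ vp * distXm x y ^ α / (1 - (2 : ℝ) ^ (-α)) * s := h
        _ = _ := by ring
    have h := hv x y
    simp only [Function.iterate_zero, id_eq, Nat.cast_zero, neg_zero, zero_mul, Real.rpow_zero,
      one_mul, add_mul]
    linarith
  | succ n ih =>
    intro x y
    rw [Function.iterate_succ_apply']
    refine (Qbase_holder hp0 hp1 hpHolder ih (hbound n) x y).trans_eq ?_
    have hpow : (2 : ℝ) ^ (-((n + 1 : ℕ) : ℝ) * α) = 2 ^ (-α) * 2 ^ (-(n : ℝ) * α) := by
      rw [← Real.rpow_add (by norm_num)]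
      congr 1
      push_cast
      ring
    have hne : 1 - (2 : ℝ) ^ (-α) ≠ 0 := (sub_pos.2 hr).ne'
    rw [hpow]
    field_simp
    ring
end
end

section
/- Let T be the left shift on X = {1,…,ℓ}^ℤ and let A : X → GL(d,ℝ) be an α-Hölder fiber bunched cocycle with stable holonomies H^s. Let a = T^q(a) be a periodic point such that A^q(a) has eigenvalues of multiplicity one with distinct absolute values. Then for every z ∈ W^s(a) and every v̂ ∈ P(ℝ^d), the sequence Â^{nq}(z)·v̂ converges in P(ℝ^d) to an eigen-direction of A^q(a) as n → ∞. -/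
/-! The direction of `Aⁿ(z) v` converges by a Poincaré–Perron argument, which uses only that
`A^q(T^{nq} z) → A^q(a)`; no rate, and hence no holonomy, is required.

Since `z` is in the stable set of the periodic point `a`, the points `T^{nq} z` converge to `a` in
the product topology (`tendsto_shift_periodic`). Hölder continuity makes `x ↦ A^q(x)` continuous
(`continuous_cocyc`), so the matrices `B_n = A^q(T^{nq} z)` converge to `P = A^q(a)`. In an
eigenbasis of `P`, the coordinates `x_n` of `A^{nq}(z) v` satisfy
`|x_{n+1}^i - χ_i x_n^i| ≤ ε_n ‖x_n‖` with `ε_n → 0`, and `x_n ≠ 0`.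

Once `ε_n` is small, an index carrying the largest coordinate can only be replaced by one with a
larger `|χ|`, so this index is eventually constant, equal to some `k` (`exists_dominant_index`).
For `i ≠ k` let `u_n = |x_n^i| / |x_n^k| ≤ 1`. If `|χ_i| < |χ_k|` then
`u_{n+1} ≤ θ u_n + o(1)` with `θ = |χ_i| / |χ_k|`; if `|χ_i| > |χ_k|` then
`u_n ≤ θ u_{n+1} + o(1)` with `θ = |χ_k| / |χ_i|`. In both cases eventual upper bounds of `u`
improve by the factor `θ < 1` (`tendsto_zero_of_bound_improves`), so `u_n → 0`, and the direction
converges to that of `e_k`. -/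

open MeasureTheory Filter Matrix Set

noncomputable section

attribute [local instance] Matrix.linftyOpNormedAddCommGroup Matrix.linftyOpNormedRing
attribute [local instance] Classical.propDecidable

variable {ℓ d : ℕ}

/-- Iterates of a `GL(d,ℝ)`-valued cocycle: `Aⁿ(x) = A(Tⁿ⁻¹x)⋯A(x)`. -/
def cocyc (A : XX ℓ → GL (Fin d) ℝ) : ℕ → XX ℓ → GL (Fin d) ℝ
  | 0, _ => 1
  | n + 1, x => cocyc A n (shiftT x) * A x

/-- Backward iterates `A⁻ⁿ(x) = A(T⁻ⁿx)⁻¹⋯A(T⁻¹x)⁻¹`. -/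
def cocycNeg (A : XX ℓ → GL (Fin d) ℝ) : ℕ → XX ℓ → GL (Fin d) ℝ
  | 0, _ => 1
  | n + 1, x => cocycNeg A n (shiftInv x) * (A (shiftInv x))⁻¹

/-- sup distance between two matrix valued functions. -/
def supDist {ι : Type*} [Fintype ι] (A B : XX ℓ → Matrix ι ι ℝ) : ℝ := ⨆ x, ‖A x - B x‖

/-- the uniform distance `d(A,B) = ‖A - B‖_∞ + ‖A⁻¹ - B⁻¹‖_∞`. -/
def unifDist (A B : XX ℓ → GL (Fin d) ℝ) : ℝ :=
  supDist (fun x => (A x : Matrix (Fin d) (Fin d) ℝ)) (fun x => (B x : Matrix (Fin d) (Fin d) ℝ)) +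
  supDist (fun x => (((A x)⁻¹ : GL (Fin d) ℝ) : Matrix (Fin d) (Fin d) ℝ))
    (fun x => (((B x)⁻¹ : GL (Fin d) ℝ) : Matrix (Fin d) (Fin d) ℝ))

/-- `A` is `α`-Hölder continuous with constant `C`. -/
def HolderOn (α C : ℝ) (A : XX ℓ → GL (Fin d) ℝ) : Prop :=
  ∀ x y : XX ℓ, ‖(A x : Matrix (Fin d) (Fin d) ℝ) - (A y : Matrix (Fin d) (Fin d) ℝ)‖ ≤
    C * distX x y ^ α

/-- fiber bunching: for some `N`, `‖A^N(x)‖ ‖A^N(x)⁻¹‖ 2^{-Nα} < 1` for all `x`. -/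
def FiberBunched (α : ℝ) (A : XX ℓ → GL (Fin d) ℝ) : Prop :=
  ∃ N : ℕ, 0 < N ∧ ∀ x : XX ℓ,
    ‖(cocyc A N x : Matrix (Fin d) (Fin d) ℝ)‖ *
      ‖(((cocyc A N x)⁻¹ : GL (Fin d) ℝ) : Matrix (Fin d) (Fin d) ℝ)‖ *
      (2 : ℝ) ^ (-(N : ℝ) * α) < 1

/-- `L` is the maximal Lyapunov exponent of `A` (Furstenberg–Kesten a.e. limit). -/
def IsMaxLyap (μ : Measure (XX ℓ)) (A : XX ℓ → GL (Fin d) ℝ) (L : ℝ) : Prop :=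
  ∀ᵐ x ∂μ, Tendsto
    (fun n : ℕ => (1 / n : ℝ) * Real.log ‖(cocyc A n x : Matrix (Fin d) (Fin d) ℝ)‖)
    atTop (nhds L)

/-- iterates of a matrix valued cocycle. -/
def cocycM {ι : Type*} [Fintype ι] (B : XX ℓ → Matrix ι ι ℝ) : ℕ → XX ℓ → Matrix ι ι ℝ
  | 0, _ => 1
  | n + 1, x => cocycM B n (shiftT x) * B x

/-- backward iterates of a matrix valued cocycle. -/
def cocycMNeg {ι : Type*} [Fintype ι] [DecidableEq ι] (B : XX ℓ → Matrix ι ι ℝ) :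
    ℕ → XX ℓ → Matrix ι ι ℝ
  | 0, _ => 1
  | n + 1, x => cocycMNeg B n (shiftInv x) * (B (shiftInv x))⁻¹

/-- the stable holonomy `H^s_{x,y} = lim_n (Bⁿ(y))⁻¹ Bⁿ(x)`. -/
def stableHolM {ι : Type*} [Fintype ι] [DecidableEq ι] (B : XX ℓ → Matrix ι ι ℝ)
    (x y : XX ℓ) : Matrix ι ι ℝ :=
  limUnder atTop (fun n : ℕ => (cocycM B n y)⁻¹ * cocycM B n x)

/-- the unstable holonomy `H^u_{x,y} = lim_n (B⁻ⁿ(y))⁻¹ B⁻ⁿ(x)`. -/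
def unstableHolM {ι : Type*} [Fintype ι] [DecidableEq ι] (B : XX ℓ → Matrix ι ι ℝ)
    (x y : XX ℓ) : Matrix ι ι ℝ :=
  limUnder atTop (fun n : ℕ => (cocycMNeg B n y)⁻¹ * cocycMNeg B n x)

/-- `a` belongs to the (topological) support of `μ`. -/
def memSupp (μ : Measure (XX ℓ)) (a : XX ℓ) : Prop :=
  ∀ ε : ℝ, 0 < ε → 0 < μ {x | distX x a < ε}

/-- The pinching and twisting condition of Bonatti–Viana for a matrix valued cocycle. -/
def PinchTwistM {ι : Type*} [Fintype ι] [DecidableEq ι]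
    (μ : Measure (XX ℓ)) (B : XX ℓ → Matrix ι ι ℝ) : Prop :=
  ∃ (q l : ℕ) (a z : XX ℓ) (e : ι → ι → ℝ) (χ : ι → ℝ),
    0 < q ∧ shiftT^[q] a = a ∧
    z ∈ WuLoc a ∧ shiftT^[l] z ∈ WsLoc a ∧
    memSupp μ a ∧ memSupp μ z ∧
    (∀ i, e i ≠ 0) ∧
    (∀ i, (cocycM B q a) *ᵥ e i = χ i • e i) ∧
    (∀ i j, i ≠ j → |χ i| ≠ |χ j|) ∧
    (∀ I J : Finset ι, I.card + J.card = Fintype.card ι →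
      (Submodule.span ℝ
          ((fun i => (stableHolM B (shiftT^[l] z) a * cocycM B l z * unstableHolM B a z) *ᵥ e i) '' ↑I)
        ⊔ Submodule.span ℝ (e '' ↑J) = ⊤) ∧
      (Submodule.span ℝ
          ((fun i => (stableHolM B (shiftT^[l] z) a * cocycM B l z * unstableHolM B a z)⁻¹ *ᵥ e i) '' ↑I)
        ⊔ Submodule.span ℝ (e '' ↑J) = ⊤))

/-- Pinching and twisting for a `GL(d,ℝ)`-valued cocycle. -/
def PinchTwist (μ : Measure (XX ℓ)) (A : XX ℓ → GL (Fin d) ℝ) : Prop :=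
  PinchTwistM μ (fun x => (A x : Matrix (Fin d) (Fin d) ℝ))

instance {d : ℕ} : MeasurableSpace (Projectivization ℝ (Fin d → ℝ)) :=
  inferInstanceAs (MeasurableSpace (Quotient (projectivizationSetoid ℝ (Fin d → ℝ))))

instance {d : ℕ} : TopologicalSpace (Projectivization ℝ (Fin d → ℝ)) :=
  inferInstanceAs (TopologicalSpace (Quotient (projectivizationSetoid ℝ (Fin d → ℝ))))

lemma glMulVec_inj {d : ℕ} (g : GL (Fin d) ℝ) :
    Function.Injective fun v : Fin d → ℝ => (g : Matrix (Fin d) (Fin d) ℝ) *ᵥ v := by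
  intro v w h
  have h2 := congrArg (fun u => ((g⁻¹ : GL (Fin d) ℝ) : Matrix (Fin d) (Fin d) ℝ) *ᵥ u) h
  simp only [Matrix.mulVec_mulVec] at h2
  rwa [show ((g⁻¹ : GL (Fin d) ℝ) : Matrix (Fin d) (Fin d) ℝ) * (g : Matrix (Fin d) (Fin d) ℝ) = 1
      from g.inv_mul, Matrix.one_mulVec, Matrix.one_mulVec] at h2

/-- the projective action of `g ∈ GL(d,ℝ)` on `P(ℝ^d)`. -/
def projAct {d : ℕ} (g : GL (Fin d) ℝ) :
    Projectivization ℝ (Fin d → ℝ) → Projectivization ℝ (Fin d → ℝ) :=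
  Projectivization.map ((Matrix.toLin' (g : Matrix (Fin d) (Fin d) ℝ)))
    (by
      have h : ⇑(Matrix.toLin' (g : Matrix (Fin d) (Fin d) ℝ)) =
          fun v : Fin d → ℝ => (g : Matrix (Fin d) (Fin d) ℝ) *ᵥ v := by
        funext v; simp [Matrix.toLin'_apply]
      rw [h]
      exact glMulVec_inj g)
lemma glMulVec_ne_zero {d : ℕ} (g : GL (Fin d) ℝ) {v : Fin d → ℝ} (hv : v ≠ 0) :
    (g : Matrix (Fin d) (Fin d) ℝ) *ᵥ v ≠ 0 := fun h =>
  hv (glMulVec_inj g (h.trans (Matrix.mulVec_zero _).symm))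

/-! ### Perturbed diagonal recursions -/

/-- A sequence in `[0, 1]` whose eventual upper bounds can be improved by a factor `θ < 1`, up to
an arbitrarily small error, tends to zero. -/
lemma tendsto_zero_of_bound_improves {u : ℕ → ℝ} {θ : ℝ} (hθ0 : 0 ≤ θ) (hθ1 : θ < 1)
    (hu0 : ∀ n, 0 ≤ u n) (hu1 : ∀ᶠ n in atTop, u n ≤ 1)
    (h : ∀ c : ℝ, 0 ≤ c → (∀ᶠ n in atTop, u n ≤ c) →
      ∀ η : ℝ, 0 < η → ∀ᶠ n in atTop, u n ≤ θ * c + η) :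
    Tendsto u atTop (nhds 0) := by
  have key : ∀ η : ℝ, 0 < η → ∀ m : ℕ, ∀ᶠ n in atTop, u n ≤ θ ^ m + η := by
    intro η hη m
    induction m with
    | zero => filter_upwards [hu1] with n hn; simp only [pow_zero]; linarith
    | succ m ih =>
      -- the error `(1 - θ) η` keeps the additive constant `η` fixed under iteration
      filter_upwards [h _ (by positivity) ih ((1 - θ) * η) (mul_pos (by linarith) hη)] with n hn
      rw [pow_succ]
      linarith
  rw [Metric.tendsto_atTop']
  intro δ hδ
  obtain ⟨m, hm⟩ := exists_pow_lt_of_lt_one (half_pos hδ) hθ1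
  obtain ⟨N, hN⟩ := eventually_atTop.1 (key (δ / 2) (half_pos hδ) m)
  refine ⟨N, fun n hn => ?_⟩
  rw [Real.dist_eq, sub_zero, abs_of_nonneg (hu0 n)]
  have := hN n hn.le
  linarith

lemma abs_coord_bounds {p r c δ : ℝ} (h : |r - c * p| ≤ δ) :
    |r| ≤ |c| * |p| + δ ∧ |c| * |p| - δ ≤ |r| := by
  have h1 := abs_sub_abs_le_abs_sub r (c * p)
  have h2 := abs_sub_abs_le_abs_sub (c * p) r
  rw [abs_sub_comm] at h2
  rw [abs_mul] at h1 h2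
  constructor <;> linarith

/-- Along a perturbed diagonal recursion with distinct `|χ i|`, one coordinate eventually carries
the sup norm: the index of the largest coordinate can only move towards larger `|χ i|`. -/
lemma exists_dominant_index {d : ℕ} {x : ℕ → Fin d → ℝ} {χ : Fin d → ℝ} {ε : ℕ → ℝ}
    (hx : ∀ n, x n ≠ 0) (hε : Tendsto ε atTop (nhds 0))
    (hrec : ∀ n i, |x (n + 1) i - χ i * x n i| ≤ ε n * ‖x n‖)
    (hχ : ∀ i j, i ≠ j → |χ i| ≠ |χ j|) :
    ∃ k, ∀ᶠ n in atTop, |x n k| = ‖x n‖ := by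
  have hne : Nonempty (Fin d) := by
    by_contra hcon
    rw [not_nonempty_iff] at hcon
    exact hx 0 (Subsingleton.elim _ _)
  have hmax : ∀ n, ∃ k, |x n k| = ‖x n‖ := fun n => by
    obtain ⟨k, hk⟩ := Finite.exists_max fun i => |x n i|
    refine ⟨k, le_antisymm (norm_le_pi_norm (x n) k) ?_⟩
    exact (pi_norm_le_iff_of_nonneg (abs_nonneg _)).2 hk
  choose κ hκ using hmax
  have hsmall : ∀ᶠ n in atTop, ∀ i j, |χ i| < |χ j| → 2 * ε n < |χ j| - |χ i| := by
    rw [eventually_all]; intro i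
    rw [eventually_all]; intro j
    by_cases hij : |χ i| < |χ j|
    · filter_upwards [hε.eventually_lt_const (show (0 : ℝ) < (|χ j| - |χ i|) / 2 by linarith)]
        with n hn _
      linarith
    · exact Eventually.of_forall fun n h => absurd h hij
  obtain ⟨N, hN⟩ := eventually_atTop.1 hsmall
  have hmono : Monotone fun n => |χ (κ (N + n))| := by
    refine monotone_nat_of_le_succ fun n => ?_
    by_contra! hlt
    have h1 := hN (N + n) (by omega) _ _ hlt
    have hpos : 0 < ‖x (N + n)‖ := norm_pos_iff.2 (hx _)
    have h2 := (abs_coord_bounds (hrec (N + n) (κ (N + (n + 1))))).1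
    have h3 := (abs_coord_bounds (hrec (N + n) (κ (N + n)))).2
    have h4 : |x (N + n) (κ (N + (n + 1)))| ≤ ‖x (N + n)‖ := norm_le_pi_norm (x (N + n)) _
    have h5 : |x (N + n + 1) (κ (N + n))| ≤ ‖x (N + n + 1)‖ := norm_le_pi_norm (x (N + n + 1)) _
    have h6 : |x (N + n + 1) (κ (N + (n + 1)))| = ‖x (N + n + 1)‖ := hκ _
    rw [hκ] at h3
    have h7 := mul_le_mul_of_nonneg_left h4 (abs_nonneg (χ (κ (N + (n + 1)))))
    nlinarith [mul_lt_mul_of_pos_right h1 hpos]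
  obtain ⟨_, ⟨n₀, rfl⟩, hn₀⟩ := Set.exists_max_image (Set.range fun n => κ (N + n))
    (fun i => |χ i|) (Set.toFinite _) ⟨_, 0, rfl⟩
  refine ⟨κ (N + n₀), eventually_atTop.2 ⟨N + n₀, fun n hn => ?_⟩⟩
  obtain ⟨m, rfl⟩ := Nat.exists_eq_add_of_le (show N ≤ n by omega)
  have heq : κ (N + m) = κ (N + n₀) := by
    by_contra hcon
    exact hχ _ _ hcon (le_antisymm (hn₀ _ ⟨m, rfl⟩) (hmono (by omega)))
  rw [← heq]
  exact hκ _

/-- Poincaré–Perron: a nowhere zero solution of a perturbed diagonal recursion with distinct `|χ i|`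
aligns with one coordinate axis. -/
lemma exists_axis_tendsto {d : ℕ} {x : ℕ → Fin d → ℝ} {χ : Fin d → ℝ} {ε : ℕ → ℝ}
    (hx : ∀ n, x n ≠ 0) (hε : Tendsto ε atTop (nhds 0))
    (hrec : ∀ n i, |x (n + 1) i - χ i * x n i| ≤ ε n * ‖x n‖)
    (hχ : ∀ i j, i ≠ j → |χ i| ≠ |χ j|) :
    ∃ k, (∀ᶠ n in atTop, x n k ≠ 0) ∧
      Tendsto (fun n => (x n k)⁻¹ • x n) atTop (nhds (Pi.single k 1)) := by
  obtain ⟨k, hk⟩ := exists_dominant_index hx hε hrec hχ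
  have hk0 : ∀ᶠ n in atTop, x n k ≠ 0 := by
    filter_upwards [hk] with n hn h0
    rw [h0, abs_zero] at hn
    exact hx n (norm_eq_zero.1 hn.symm)
  refine ⟨k, hk0, tendsto_pi_nhds.2 fun i => ?_⟩
  rcases eq_or_ne i k with rfl | hik
  · rw [Pi.single_eq_same]
    refine tendsto_const_nhds.congr' ?_
    filter_upwards [hk0] with n hn
    simp [hn]
  rw [Pi.single_eq_of_ne hik, tendsto_zero_iff_abs_tendsto_zero]
  have hu : (abs ∘ fun n => ((x n k)⁻¹ • x n) i) = fun n => |x n i| / |x n k| := by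
    funext n
    simp [abs_mul, abs_inv, div_eq_inv_mul]
  rw [hu]
  have hk' := (tendsto_add_atTop_nat 1).eventually hk
  have hεlt : ∀ r : ℝ, 0 < r → ∀ᶠ n in atTop, ε n < r := fun r hr => hε.eventually_lt_const hr
  have hu1 : ∀ᶠ n in atTop, |x n i| / |x n k| ≤ 1 := by
    filter_upwards [hk] with n hn
    rw [hn]
    exact div_le_one_of_le₀ (norm_le_pi_norm (x n) i) (norm_nonneg _)
  have hu0 : ∀ n, 0 ≤ |x n i| / |x n k| := fun n => by positivity
  rcases lt_or_gt_of_ne (hχ i k hik) with hlt | hgt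
  · -- weaker eigenvalue: the ratio contracts forward in time
    have hb : 0 < |χ k| := (abs_nonneg _).trans_lt hlt
    refine tendsto_zero_of_bound_improves (θ := |χ i| / |χ k|) (by positivity)
      ((div_lt_one hb).2 hlt) hu0 hu1 fun c hc huc η hη => ?_
    have hM : 0 < 1 + (|χ i| / |χ k| * c + η) := by positivity
    have : ∀ᶠ n in atTop, |x (n + 1) i| / |x (n + 1) k| ≤ |χ i| / |χ k| * c + η := by
      filter_upwards [hk, hk', hk0, huc,
        hεlt (η * |χ k| / (1 + (|χ i| / |χ k| * c + η))) (by positivity)] with n h1 h2 h3 h4 h5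
      have hs : 0 < |x n k| := abs_pos.2 h3
      have hs' : 0 < |x (n + 1) k| := by rw [h2]; exact norm_pos_iff.2 (hx _)
      rw [div_le_iff₀ hs] at h4
      rw [lt_div_iff₀ hM] at h5
      rw [div_le_iff₀ hs']
      have h6 := (abs_coord_bounds (hrec n i)).1
      have h7 := (abs_coord_bounds (hrec n k)).2
      rw [← h1] at h6 h7
      have h8 := mul_le_mul_of_nonneg_left h4 (abs_nonneg (χ i))
      have hM' : 0 ≤ |χ i| / |χ k| * c + η := by positivity
      have h9 := mul_le_mul_of_nonneg_left h7 hM'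
      have h10 : |χ i| / |χ k| * c * |χ k| = |χ i| * c := by field_simp
      have h11 := mul_lt_mul_of_pos_right h5 hs
      have h12 : (|χ i| / |χ k| * c + η) * (|χ k| * |x n k| - ε n * |x n k|) =
          |χ i| * c * |x n k| + η * |χ k| * |x n k|
            - ε n * (|χ i| / |χ k| * c + η) * |x n k| := by
        rw [← h10]; ring
      rw [h12] at h9
      linarith
    exact (eventually_atTop.1 this).elim fun N hN => eventually_atTop.2 ⟨N + 1, fun n hn => by
      obtain ⟨m, rfl⟩ := Nat.exists_eq_add_of_le' (show 1 ≤ n by omega)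
      exact hN m (by omega)⟩
  · -- stronger eigenvalue: the ratio contracts backward in time
    have ha : 0 < |χ i| := (abs_nonneg _).trans_lt hgt
    refine tendsto_zero_of_bound_improves (θ := |χ k| / |χ i|) (by positivity)
      ((div_lt_one ha).2 hgt) hu0 hu1 fun c hc huc η hη => ?_
    filter_upwards [hk, hk', hk0, (tendsto_add_atTop_nat 1).eventually huc,
      hεlt (η * |χ i| / (c + 1)) (by positivity)] with n h1 h2 h3 h4 h5
    have hs : 0 < |x n k| := abs_pos.2 h3
    have hs' : 0 < |x (n + 1) k| := by rw [h2]; exact norm_pos_iff.2 (hx _)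
    rw [div_le_iff₀ hs'] at h4
    rw [lt_div_iff₀ (by positivity)] at h5
    rw [div_le_iff₀ hs]
    have h6 := (abs_coord_bounds (hrec n i)).2
    have h7 := (abs_coord_bounds (hrec n k)).1
    rw [← h1] at h6 h7
    have h8 := mul_le_mul_of_nonneg_left h7 hc
    have h9 := mul_lt_mul_of_pos_right h5 hs
    refine le_of_mul_le_mul_left ?_ ha
    have h10 : |χ i| * ((|χ k| / |χ i| * c + η) * |x n k|) =
        |χ k| * c * |x n k| + η * |χ i| * |x n k| := by
      field_simp
    rw [h10]
    linarith

/-! ### The shift space and continuity of the cocycle -/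

lemma distX_nonneg {ℓ : ℕ} (x y : XX ℓ) : 0 ≤ distX x y := by
  unfold distX
  split_ifs <;> positivity

lemma distX_le_of_agree {ℓ : ℕ} {x y : XX ℓ} {N : ℕ}
    (h : ∀ n : ℕ, n < N → x n = y n ∧ x (-(n : ℤ)) = y (-(n : ℤ))) :
    distX x y ≤ (1 / 2 : ℝ) ^ N := by
  unfold distX
  split_ifs with hxy
  · positivity
  have hne : {n : ℕ | x (n : ℤ) ≠ y (n : ℤ) ∨ x (-(n : ℤ)) ≠ y (-(n : ℤ))}.Nonempty := by
    by_contra hcon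
    rw [Set.not_nonempty_iff_eq_empty, Set.eq_empty_iff_forall_notMem] at hcon
    refine hxy (funext fun i => ?_)
    have := hcon i.natAbs
    simp only [Set.mem_ofPred_eq, not_or, not_not] at this
    rcases Int.natAbs_eq i with hi | hi <;> rw [hi]
    · exact this.1
    · exact this.2
  have hle : N ≤ sInf {n : ℕ | x (n : ℤ) ≠ y (n : ℤ) ∨ x (-(n : ℤ)) ≠ y (-(n : ℤ))} := by
    refine le_csInf hne fun n hn => ?_
    by_contra! hlt
    exact hn.elim (fun h' => h' (h n hlt).1) (fun h' => h' (h n hlt).2)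
  rw [_root_.zpow_neg, zpow_natCast, ← inv_pow, ← one_div]
  exact pow_le_pow_of_le_one (by norm_num) (by norm_num) hle

/-- The product topology on `XX ℓ` is at least as fine as the one induced by `distX`. -/
lemma tendsto_distX {ℓ : ℕ} (x : XX ℓ) : Tendsto (fun y => distX y x) (nhds x) (nhds 0) := by
  refine (tendsto_order.2 ⟨fun r hr => Eventually.of_forall fun y =>
    hr.trans_le (distX_nonneg y x), fun r hr => ?_⟩)
  obtain ⟨N, hN⟩ := exists_pow_lt_of_lt_one hr (show (1 / 2 : ℝ) < 1 by norm_num)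
  have hcoord : ∀ i : ℤ, ∀ᶠ y : XX ℓ in nhds x, y i = x i := fun i =>
    ((continuous_apply (A := fun _ : ℤ => Fin ℓ) i).tendsto x).eventually (p := fun s => s = x i) (by
      rw [nhds_discrete]; exact rfl)
  have : ∀ᶠ y : XX ℓ in nhds x, ∀ n ∈ Finset.range N,
      y (n : ℤ) = x (n : ℤ) ∧ y (-(n : ℤ)) = x (-(n : ℤ)) :=
    (Finset.eventually_all _).2 fun n _ => (hcoord _).and (hcoord _)
  filter_upwards [this] with y hy
  exact (distX_le_of_agree fun n hn => hy n (Finset.mem_range.2 hn)).trans_lt hN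

lemma continuous_of_holderOn {ℓ d : ℕ} {A : XX ℓ → GL (Fin d) ℝ} {α C : ℝ} (hα : 0 < α)
    (h : HolderOn α C A) : Continuous fun x => (A x : Matrix (Fin d) (Fin d) ℝ) := by
  refine continuous_iff_continuousAt.2 fun x => ?_
  refine tendsto_iff_norm_sub_tendsto_zero.2 ?_
  refine squeeze_zero (fun _ => norm_nonneg _) (fun y => h y x) ?_
  have := ((tendsto_distX x).rpow_const (Or.inr hα.le)).const_mul C
  rwa [Real.zero_rpow hα.ne', mul_zero] at this

lemma continuous_shiftT {ℓ : ℕ} : Continuous (shiftT : XX ℓ → XX ℓ) :=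
  continuous_pi fun i => continuous_apply (i + 1)

lemma continuous_cocyc {ℓ d : ℕ} {A : XX ℓ → GL (Fin d) ℝ}
    (h : Continuous fun x => (A x : Matrix (Fin d) (Fin d) ℝ)) (m : ℕ) :
    Continuous fun x => (cocyc A m x : Matrix (Fin d) (Fin d) ℝ) := by
  induction m with
  | zero => exact continuous_const
  | succ m ih =>
    simp only [cocyc, Units.val_mul]
    exact (ih.comp continuous_shiftT).mul h

lemma cocyc_add {ℓ d : ℕ} (A : XX ℓ → GL (Fin d) ℝ) (m n : ℕ) (x : XX ℓ) :
    cocyc A (m + n) x = cocyc A m (shiftT^[n] x) * cocyc A n x := by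
  induction n generalizing x with
  | zero => simp [cocyc]
  | succ n ih =>
    rw [← add_assoc, cocyc, ih, cocyc, Function.iterate_succ_apply, mul_assoc]

lemma shiftT_iterate_apply {ℓ : ℕ} (n : ℕ) (x : XX ℓ) (i : ℤ) :
    shiftT^[n] x i = x (i + n) := by
  induction n generalizing x with
  | zero => simp
  | succ n ih =>
    rw [Function.iterate_succ_apply, ih, shiftT]
    congr 1
    push_cast
    ring

lemma tendsto_shift_periodic {ℓ : ℕ} {q l : ℕ} (hq : 0 < q) {a z : XX ℓ}
    (ha : shiftT^[q] a = a) (hz : shiftT^[l * q] z ∈ WsLoc a) :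
    Tendsto (fun n : ℕ => shiftT^[n * q] z) atTop (nhds a) := by
  have hper : ∀ m : ℕ, shiftT^[m * q] a = a := fun m => by
    rw [mul_comm, Function.iterate_mul]
    exact Function.iterate_fixed ha m
  refine tendsto_pi_nhds.2 fun i => ?_
  refine tendsto_const_nhds.congr' ?_
  filter_upwards [eventually_ge_atTop (l + i.natAbs)] with n hn
  obtain ⟨m, rfl⟩ := Nat.exists_eq_add_of_le (show l ≤ n by omega)
  have hm : i.natAbs ≤ m * q := (show i.natAbs ≤ m by omega).trans (Nat.le_mul_of_pos_right m hq)
  have h1 := hz (i + (m * q : ℕ)) (by omega)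
  rw [shiftT_iterate_apply] at h1
  have h2 := congrFun (hper m) i
  rw [shiftT_iterate_apply] at h2
  rw [shiftT_iterate_apply, ← h2, ← h1]
  congr 1
  push_cast
  ring

/-! ### Convergence in projective space -/

/-- Convergence of directions follows from convergence of suitably rescaled representatives. -/
lemma tendsto_mk_of_smul {d : ℕ} {w : ℕ → Fin d → ℝ} (hw : ∀ n, w n ≠ 0) {u : Fin d → ℝ}
    (hu : u ≠ 0) {c : ℕ → ℝ} (hc : ∀ᶠ n in atTop, c n ≠ 0)
    (h : Tendsto (fun n => c n • w n) atTop (nhds u)) :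
    Tendsto (fun n => Projectivization.mk ℝ (w n) (hw n)) atTop
      (nhds (Projectivization.mk ℝ u hu)) := by
  -- `c n` may vanish for finitely many `n`, where it is replaced by `1`
  let c' : ℕ → ℝ := fun n => if c n = 0 then 1 else c n
  have hc' : ∀ n, c' n ≠ 0 := fun n => by
    by_cases h0 : c n = 0 <;> simp [c', h0]
  have h' : Tendsto (fun n => c' n • w n) atTop (nhds u) := by
    refine h.congr' ?_
    filter_upwards [hc] with n hn
    simp [c', hn]
  have hcont : Continuous fun v : {v : Fin d → ℝ // v ≠ 0} => Projectivization.mk ℝ v.1 v.2 :=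
    continuous_quot_mk
  have hsub : Tendsto
      (fun n => (⟨c' n • w n, smul_ne_zero (hc' n) (hw n)⟩ : {v : Fin d → ℝ // v ≠ 0}))
      atTop (nhds ⟨u, hu⟩) := tendsto_subtype_rng.2 h'
  refine ((hcont.tendsto ⟨u, hu⟩).comp hsub).congr fun n => ?_
  exact (Projectivization.mk_eq_mk_iff' ℝ _ _ _ _).2 ⟨c' n, rfl⟩

/-- Proposition: convergence to an eigendirection on stable sets.
If `a = T^q(a)` is periodic and `A^q(a)` has eigenvalues of multiplicity one with
distinct absolute values, then for every `z ∈ W^s(a)` and every direction `v̂`, the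
sequence `Â^{nq}(z)·v̂` converges in `P(ℝ^d)` to an eigendirection of `A^q(a)`. -/
theorem convergence_to_eigendirection_on_stable_set
    {ℓ d : ℕ} (hℓ : 0 < ℓ)
    (A : XX ℓ → GL (Fin d) ℝ)
    (α CA : ℝ) (hα : 0 < α)
    (hHolder : HolderOn α CA A)
    (hFB : FiberBunched α A)
    (q : ℕ) (hq : 0 < q) (a : XX ℓ) (ha : shiftT^[q] a = a)
    (e : Fin d → Fin d → ℝ) (χ : Fin d → ℝ)
    (he : ∀ i, e i ≠ 0)
    (heig : ∀ i, (cocyc A q a : Matrix (Fin d) (Fin d) ℝ) *ᵥ e i = χ i • e i)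
    (hsimple : ∀ i j, i ≠ j → |χ i| ≠ |χ j|)
    (z : XX ℓ) (hz : ∃ l : ℕ, shiftT^[l * q] z ∈ WsLoc a) :
    ∀ (v : Fin d → ℝ) (hv : v ≠ 0), ∃ i : Fin d,
      Tendsto
        (fun n : ℕ => Projectivization.mk ℝ
          ((cocyc A (n * q) z : Matrix (Fin d) (Fin d) ℝ) *ᵥ v)
          (glMulVec_ne_zero _ hv))
        atTop (nhds (Projectivization.mk ℝ (e i) (he i))) := by
  intro v hv
  set P : Matrix (Fin d) (Fin d) ℝ := (cocyc A q a : Matrix (Fin d) (Fin d) ℝ) with hP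
  let B : ℕ → Matrix (Fin d) (Fin d) ℝ := fun n => cocyc A q (shiftT^[n * q] z)
  let w : ℕ → Fin d → ℝ := fun n => (cocyc A (n * q) z : Matrix (Fin d) (Fin d) ℝ) *ᵥ v
  have hw : ∀ n, w n ≠ 0 := fun n => glMulVec_ne_zero _ hv
  have hwrec : ∀ n, w (n + 1) = B n *ᵥ w n := fun n => by
    simp only [w, B, Matrix.mulVec_mulVec]
    rw [show (n + 1) * q = q + n * q by ring, cocyc_add, Units.val_mul]
  have hB : Tendsto B atTop (nhds P) := by
    obtain ⟨l, hl⟩ := hz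
    exact ((continuous_cocyc (continuous_of_holderOn hα hHolder) q).tendsto a).comp
      (tendsto_shift_periodic hq ha hl)
  -- `M` is the change of basis to the eigenbasis
  let M : Matrix (Fin d) (Fin d) ℝ := (Matrix.of e)ᵀ
  have hli : LinearIndependent ℝ e := by
    refine Module.End.eigenvectors_linearIndependent' (Matrix.toLin' P) χ
      (fun i j hij => ?_) e fun i => ?_
    · by_contra hne
      exact hsimple i j hne (by rw [hij])
    · exact ⟨Module.End.mem_eigenspace_iff.2 (by rw [Matrix.toLin'_apply]; exact heig i), he i⟩
  have hM : IsUnit M := Matrix.linearIndependent_cols_iff_isUnit.1 hli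
  have hdet : IsUnit M.det := (Matrix.isUnit_iff_isUnit_det M).1 hM
  have hPM : P * M = M * Matrix.diagonal χ := by
    ext i j
    have := congrFun (heig j) i
    rw [Matrix.mul_diagonal]
    simp only [Matrix.mulVec, dotProduct, Pi.smul_apply, smul_eq_mul] at this
    simp only [Matrix.mul_apply, M, Matrix.transpose_apply, Matrix.of_apply]
    rw [this, mul_comm]
  let x : ℕ → Fin d → ℝ := fun n => M⁻¹ *ᵥ w n
  have hMx : ∀ n, M *ᵥ x n = w n := fun n => by
    simp only [x, Matrix.mulVec_mulVec]
    rw [Matrix.mul_nonsing_inv _ hdet, Matrix.one_mulVec]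
  have hx : ∀ n, x n ≠ 0 := fun n h0 => hw n (by rw [← hMx n, h0, Matrix.mulVec_zero])
  have hE : Tendsto (fun n => ‖M⁻¹ * (B n - P) * M‖) atTop (nhds 0) := by
    have h1 : Tendsto (fun n => M⁻¹ * (B n - P) * M) atTop (nhds (M⁻¹ * (P - P) * M)) :=
      ((hB.sub_const P).const_mul M⁻¹).mul_const M
    simpa using h1.norm
  have hrec : ∀ n i, |x (n + 1) i - χ i * x n i| ≤ ‖M⁻¹ * (B n - P) * M‖ * ‖x n‖ := by
    intro n i
    have h1 : x (n + 1) - Matrix.diagonal χ *ᵥ x n = (M⁻¹ * (B n - P) * M) *ᵥ x n := by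
      have hD : Matrix.diagonal χ = M⁻¹ * P * M := by
        rw [mul_assoc, hPM, ← mul_assoc, Matrix.nonsing_inv_mul _ hdet, one_mul]
      rw [hD, mul_sub, sub_mul, Matrix.sub_mulVec]
      congr 1
      rw [← Matrix.mulVec_mulVec, hMx, ← Matrix.mulVec_mulVec, ← hwrec]
    have h2 := congrFun h1 i
    rw [Pi.sub_apply, Matrix.mulVec_diagonal] at h2
    rw [h2]
    exact (norm_le_pi_norm ((M⁻¹ * (B n - P) * M) *ᵥ x n) i).trans
      (Matrix.linfty_opNorm_mulVec _ _)
  obtain ⟨k, hk0, hk⟩ := exists_axis_tendsto hx hE hrec hsimple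
  refine ⟨k, tendsto_mk_of_smul hw (he k) (c := fun n => (x n k)⁻¹)
    (hk0.mono fun n hn => inv_ne_zero hn) ?_⟩
  have hcont : Continuous fun y : Fin d → ℝ => M *ᵥ y := by fun_prop
  have h1 := (hcont.tendsto _).comp hk
  have h2 : M *ᵥ Pi.single k 1 = e k := by
    rw [Matrix.mulVec_single_one]
    rfl
  rw [h2] at h1
  refine h1.congr fun n => ?_
  simp only [Function.comp, Matrix.mulVec_smul, hMx]
end
end
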